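/- There exist a point a of AG(4,3) and four pairwise disjoint maximal caps in AG(4,3) whose union is the complement of {a}; that is, AG(4,3) can be partitioned into 4 mutually disjoint maximal caps together with a single point (their common anchor). -/

import Mathlib

/-- A cap in `AG(n,3)`: a finite set of points of `Fin n → ZMod 3` containing no
three distinct collinear points (three distinct points are collinear iff they sum to zero). -/
def IsCap {n : ℕ} (C : Finset (Fin n → ZMod 3)) : Prop :=
  ∀ x ∈ C, ∀ y ∈ C, ∀ z ∈ C, x ≠ y → x ≠ z → y ≠ z → x + y + z ≠ 0

/-- A maximal cap: a cap of largest possible size. -/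
def MaximalCap {n : ℕ} (C : Finset (Fin n → ZMod 3)) : Prop :=
  IsCap C ∧ ∀ D : Finset (Fin n → ZMod 3), IsCap D → D.card ≤ C.card

/-!
Identify `AG(4,3)` with the field of 81 elements. The four cosets of the group of nonzero fourth
powers, given by `x ^ 20 = ζ` for `ζ ^ 4 = 1`, partition the complement of `0`. Each is a cap: if
`x + y + z = 0` in a coset and `u = y / x`, then `u ^ 20 = (1 + u) ^ 20 = 1`, so the norms `u ^ 10`
and `(1 + u) ^ 10` to the field of 9 elements are `±1`. Hence `u` and `u ^ 9` are the roots of a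
quadratic polynomial over `ZMod 3`. Cubing permutes these roots, which forces `u ^ 3 = u`, and then
`u = 1`. (Geometrically, each coset is the cone over an elliptic quadric in `PG(3,3)`.) As caps of
`AG(4,3)` have at most 20 points and 80 points are covered, all four cosets have exactly 20 points
and are maximal.

The bound 20 is a Fourier argument. For `w ≠ 0` let `e₀, e₁, e₂` be three times the deviations of
the sizes of the slices `w ⬝ᵥ x = c` of a cap `S` from their mean. Orthogonality evaluates the sums
over `w` of `e₀² + e₁² + e₂²` and `e₀ e₁ e₂`, which count the pairs with `x - y = 0` and the triples
with `x + y + z = 0` in `S`. If slices have at most `b` points, then `eᵢ ≤ t := 3b - |S|`, and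
`e₀ + e₁ + e₂ = 0` implies `3 e₀ e₁ e₂ + t (e₀² + e₁² + e₂²) ≥ 0`. Summing over `w ≠ 0` gives
Meshulam's bound `|S| (3ⁿ + b) ≤ 3ⁿ (3b + 1)` in dimension `n + 1`, whence the successive bounds
2, 4, 9 and 21. When equality holds, `e₀² + e₁² + e₂²` is `0` or `6t²` for each `w ≠ 0`; a 21-cap
would have exactly 35 vectors `w` of the second kind, but these come in pairs `±w`.
-/

open Finset

theorem even_card_of_involution {α : Type*} {s : Finset α} (f : α → α)
    (hs : ∀ a ∈ s, f a ∈ s) (hf : ∀ a ∈ s, f (f a) = a) (hne : ∀ a ∈ s, f a ≠ a) :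
    Even #s := by
  rw [← ZMod.natCast_eq_zero_iff_even, card_eq_sum_ones, Nat.cast_sum]
  exact sum_involution (fun a _ ↦ f a) (fun _ _ ↦ CharTwo.add_self_eq_zero _)
    (fun a ha _ ↦ hne a ha) hs hf

section Orthogonality

variable {ι K : Type*} [Fintype ι] [DecidableEq ι] [Field K] [Fintype K] [DecidableEq K]

theorem card_mul_card_dotProduct_eq_zero {v : ι → K} (hv : v ≠ 0) :
    Fintype.card K * #{w | w ⬝ᵥ v = 0} = Fintype.card K ^ Fintype.card ι := by
  obtain ⟨i, hi⟩ := Function.ne_iff.mp hv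
  let f : (ι → K) →+ K := AddMonoidHom.mk' (· ⬝ᵥ v) fun w w' ↦ add_dotProduct w w' v
  have hf : Function.Surjective f := fun c ↦ ⟨Pi.single i (c / v i), by
    simpa [f] using div_mul_cancel₀ c hi⟩
  calc Fintype.card K * #{w | w ⬝ᵥ v = 0}
      = ∑ c : K, #{w | f w = c} := by
        rw [sum_congr rfl fun c _ ↦ AddMonoidHom.card_fiber_eq_of_mem_range f (hf c) (hf 0),
          sum_const, smul_eq_mul, card_univ]
        rfl
    _ = Fintype.card K ^ Fintype.card ι := by
        rw [← card_eq_sum_card_fiberwise fun _ _ ↦ mem_univ _, card_univ, Fintype.card_fun]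

theorem sum_card_mul_card_dotProduct_sub {α : Type*} (T : Finset α) (f : α → ι → K) :
    ∑ w : ι → K, ((Fintype.card K * #{t ∈ T | w ⬝ᵥ f t = 0} : ℤ) - #T)
      = Fintype.card K ^ Fintype.card ι * (Fintype.card K - 1) * #{t ∈ T | f t = 0} := by
  have orthogonality (v : ι → K) :
      ∑ w : ι → K, ((Fintype.card K : ℤ) * (if w ⬝ᵥ v = 0 then 1 else 0) - 1)
        = Fintype.card K ^ Fintype.card ι * (Fintype.card K - 1) * if v = 0 then 1 else 0 := by
    rw [sum_sub_distrib, ← mul_sum, sum_boole, sum_const, card_univ, Fintype.card_fun]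
    split_ifs with hv
    · simp [hv]
      ring
    · have := card_mul_card_dotProduct_eq_zero hv
      simp [← this]
  calc ∑ w : ι → K, ((Fintype.card K * #{t ∈ T | w ⬝ᵥ f t = 0} : ℤ) - #T)
      = ∑ w : ι → K, ∑ t ∈ T,
          ((Fintype.card K : ℤ) * (if w ⬝ᵥ f t = 0 then 1 else 0) - 1) := by
        simp only [sum_sub_distrib, ← mul_sum, sum_boole, sum_const, nsmul_one]
    _ = _ := by
        rw [sum_comm, sum_congr rfl fun t _ ↦ orthogonality (f t), ← mul_sum, sum_boole]

end Orthogonality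

theorem sum_zmod_three {M : Type*} [AddCommMonoid M] (f : ZMod 3 → M) :
    ∑ c, f c = f 0 + f 1 + f 2 :=
  Fin.sum_univ_three f

variable {n : ℕ}

section Excess

/-- Three times the deviation of the size of the slice `w ⬝ᵥ x = c` of `S` from its mean over the
three parallel hyperplanes `c = 0, 1, 2`; the factor three keeps it an integer. -/
def excess (S : Finset (Fin n → ZMod 3)) (w : Fin n → ZMod 3) (c : ZMod 3) : ℤ :=
  3 * #{x ∈ S | w ⬝ᵥ x = c} - #S

variable (S : Finset (Fin n → ZMod 3)) (w : Fin n → ZMod 3)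

theorem sum_card_slices : #{x ∈ S | w ⬝ᵥ x = 0} + #{x ∈ S | w ⬝ᵥ x = 1} + #{x ∈ S | w ⬝ᵥ x = 2}
    = #S := by
  rw [← sum_zmod_three fun c ↦ #{x ∈ S | w ⬝ᵥ x = c},
    ← card_eq_sum_card_fiberwise fun _ _ ↦ mem_univ _]

theorem excess_add_excess_add_excess : excess S w 0 + excess S w 1 + excess S w 2 = 0 := by
  have := sum_card_slices S w
  grind [excess]

theorem excess_neg_left (c : ZMod 3) : excess S (-w) c = excess S w (-c) := by
  simp only [excess, neg_dotProduct, neg_eq_iff_eq_neg]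

theorem excess_zero_left : excess S 0 0 = 2 * #S ∧ excess S 0 1 = -#S ∧ excess S 0 2 = -#S := by
  have : (0 : ZMod 3) ≠ 2 := by decide
  refine ⟨?_, ?_, ?_⟩ <;> simp [excess, this]
  ring

theorem sum_comp_dotProduct (F : ZMod 3 → ℤ) :
    ∑ x ∈ S, F (w ⬝ᵥ x) = ∑ c, #{x ∈ S | w ⬝ᵥ x = c} * F c := by
  rw [← sum_fiberwise' S (w ⬝ᵥ ·) F]
  simp

theorem sum_excess_sq_eq_card_pairs :
    ∑ c, excess S w c ^ 2
      = 3 * (3 * #{p ∈ S ×ˢ S | w ⬝ᵥ (p.1 - p.2) = 0} - #(S ×ˢ S)) := by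
  have pairs : (#{p ∈ S ×ˢ S | w ⬝ᵥ (p.1 - p.2) = 0} : ℤ) = ∑ c, #{x ∈ S | w ⬝ᵥ x = c} ^ 2 := by
    simp only [← sum_boole, sum_product, dotProduct_sub, sub_eq_zero]
    rw [sum_comp_dotProduct S w fun c ↦ ∑ y ∈ S, if c = w ⬝ᵥ y then 1 else 0]
    simp [eq_comm, sq]
  rw [pairs, card_product, ← sum_card_slices S w, sum_zmod_three, sum_zmod_three]
  simp only [excess, ← sum_card_slices S w]
  push_cast
  ring

theorem prod_excess_eq_card_triples :
    excess S w 0 * excess S w 1 * excess S w 2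
      = 3 * #{p ∈ S ×ˢ S ×ˢ S | w ⬝ᵥ (p.1 + p.2.1 + p.2.2) = 0} - #(S ×ˢ S ×ˢ S) := by
  have triples : (#{p ∈ S ×ˢ S ×ˢ S | w ⬝ᵥ (p.1 + p.2.1 + p.2.2) = 0} : ℤ)
      = ∑ c, #{x ∈ S | w ⬝ᵥ x = c} * ∑ d, #{x ∈ S | w ⬝ᵥ x = d} *
          (#{x ∈ S | w ⬝ᵥ x = -(c + d)} : ℤ) := by
    simp only [← sum_boole, sum_product, dotProduct_add, add_eq_zero_iff_neg_eq (b := w ⬝ᵥ _)]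
    rw [sum_comp_dotProduct S w fun c ↦ ∑ y ∈ S, ∑ z ∈ S, if -(c + w ⬝ᵥ y) = w ⬝ᵥ z then 1 else 0]
    refine sum_congr rfl fun c _ ↦ ?_
    rw [sum_comp_dotProduct S w fun d ↦ ∑ z ∈ S, if -(c + d) = w ⬝ᵥ z then 1 else 0]
    simp [eq_comm]
  have add_table : -(0 + 0 : ZMod 3) = 0 ∧ -(0 + 1 : ZMod 3) = 2 ∧ -(0 + 2 : ZMod 3) = 1 ∧
      -(1 + 0 : ZMod 3) = 2 ∧ -(1 + 1 : ZMod 3) = 1 ∧ -(1 + 2 : ZMod 3) = 0 ∧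
      -(2 + 0 : ZMod 3) = 1 ∧ -(2 + 1 : ZMod 3) = 0 ∧ -(2 + 2 : ZMod 3) = 2 := by decide
  rw [triples, card_product, card_product]
  simp only [sum_zmod_three, add_table, excess, ← sum_card_slices S w]
  push_cast
  ring

theorem sum_sum_excess_sq :
    ∑ w : Fin n → ZMod 3, ∑ c, excess S w c ^ 2 = 6 * 3 ^ n * #S := by
  have diagonal : #{p ∈ S ×ˢ S | p.1 - p.2 = 0} = #S := by
    simp only [sub_eq_zero]
    rw [← diag_eq_filter, diag_card]
  have := sum_card_mul_card_dotProduct_sub (S ×ˢ S) fun p ↦ p.1 - p.2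
  simp only [ZMod.card, Fintype.card_fin, diagonal] at this
  simp only [sum_excess_sq_eq_card_pairs, ← mul_sum]
  push_cast at this ⊢
  rw [this]
  ring

end Excess

section Caps

variable {S : Finset (Fin n → ZMod 3)}

theorem isCap_iff_eq_of_add_add_eq_zero :
    IsCap S ↔ ∀ x ∈ S, ∀ y ∈ S, ∀ z ∈ S, x + y + z = 0 → x = y ∧ x = z := by
  have eq_of_add_self (u v : Fin n → ZMod 3) (h : u + u + v = 0) : u = v := by
    have key : ∀ a b : ZMod 3, a + a + b = 0 → a = b := by decide
    exact funext fun i ↦ key _ _ (congrFun h i)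
  refine ⟨fun hS x hx y hy z hz h ↦ ?_, fun hS x hx y hy z hz hxy _ _ h ↦
    hxy (hS x hx y hy z hz h).1⟩
  have hxy (e : x = y) : x = z := eq_of_add_self x z (by rwa [← e] at h)
  have hxz (e : x = z) : x = y := eq_of_add_self x y (by rwa [← e, add_right_comm] at h)
  have hyz (e : y = z) : y = x := eq_of_add_self y x (by rwa [← e, add_assoc, add_comm] at h)
  have := hS x hx y hy z hz
  grind

theorem IsCap.sum_prod_excess (hS : IsCap S) :
    ∑ w : Fin n → ZMod 3, excess S w 0 * excess S w 1 * excess S w 2 = 2 * 3 ^ n * #S := by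
  have constant_triples : {p ∈ S ×ˢ S ×ˢ S | p.1 + p.2.1 + p.2.2 = 0}
      = S.image fun x ↦ (x, x, x) := by
    have add_self_add_self (x : Fin n → ZMod 3) : x + x + x = 0 :=
      funext fun i ↦ (by decide : ∀ a : ZMod 3, a + a + a = 0) (x i)
    ext ⟨x, y, z⟩
    have := isCap_iff_eq_of_add_add_eq_zero.mp hS x
    grind
  have := sum_card_mul_card_dotProduct_sub (S ×ˢ S ×ˢ S) fun p ↦ p.1 + p.2.1 + p.2.2
  rw [constant_triples, card_image_of_injective _ fun x y h ↦ congrArg Prod.fst h] at this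
  simp only [ZMod.card, Fintype.card_fin] at this
  simp only [prod_excess_eq_card_triples]
  push_cast at this ⊢
  rw [this]
  ring

theorem IsCap.exists_card_eq_card_slice {S : Finset (Fin (n + 1) → ZMod 3)} (hS : IsCap S)
    {w : Fin (n + 1) → ZMod 3} (hw : w ≠ 0) (c : ZMod 3) :
    ∃ T : Finset (Fin n → ZMod 3), IsCap T ∧ #T = #{x ∈ S | w ⬝ᵥ x = c} := by
  obtain ⟨i, hi⟩ := Function.ne_iff.mp hw
  -- Deleting a coordinate in which `w` does not vanish is injective on `w ⬝ᵥ x = 0`.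
  let f := LinearMap.funLeft (ZMod 3) (ZMod 3) i.succAbove
  have f_inj {v : Fin (n + 1) → ZMod 3} (hwv : w ⬝ᵥ v = 0) (hv : f v = 0) : v = 0 := by
    have hv' (j : Fin n) : v (i.succAbove j) = 0 := congrFun hv j
    have hvi : v i = 0 := by
      simpa [dotProduct, Fin.sum_univ_succAbove _ i, hv', show w i ≠ 0 from hi] using hwv
    exact funext ((Fin.forall_iff_succAbove i).mpr ⟨hvi, hv'⟩)
  have slice_sum {x y z : Fin (n + 1) → ZMod 3} (hx : w ⬝ᵥ x = c) (hy : w ⬝ᵥ y = c)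
      (hz : w ⬝ᵥ z = c) : w ⬝ᵥ (x + y + z) = 0 := by
    rw [dotProduct_add, dotProduct_add, hx, hy, hz]
    exact (by decide : ∀ c : ZMod 3, c + c + c = 0) c
  refine ⟨({x ∈ S | w ⬝ᵥ x = c} : Finset _).image f, ?_, card_image_of_injOn fun x hx y hy h ↦ ?_⟩
  · rw [isCap_iff_eq_of_add_add_eq_zero] at hS ⊢
    simp only [forall_mem_image, mem_filter]
    intro x hx y hy z hz h
    have := hS x hx.1 y hy.1 z hz.1
      (f_inj (slice_sum hx.2 hy.2 hz.2) (by rwa [map_add, map_add]))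
    exact ⟨congrArg f this.1, congrArg f this.2⟩
  · simp only [coe_filter, Set.mem_ofPred_eq] at hx hy
    refine sub_eq_zero.mp (f_inj ?_ ?_)
    · rw [dotProduct_sub, hx.2, hy.2, sub_self]
    · rw [map_sub, h, sub_self]

theorem IsCap.excess_le {b : ℕ} (hb : ∀ T : Finset (Fin n → ZMod 3), IsCap T → #T ≤ b)
    {S : Finset (Fin (n + 1) → ZMod 3)} (hS : IsCap S)
    {w : Fin (n + 1) → ZMod 3} (hw : w ≠ 0) (c : ZMod 3) : excess S w c ≤ 3 * b - #S := by
  obtain ⟨T, hT, hcard⟩ := hS.exists_card_eq_card_slice hw c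
  have := hb T hT
  grind [excess]

end Caps

theorem three_mul_prod_add_mul_sum_sq {R : Type*} [CommRing R] (t : R) {x y z : R}
    (h : x + y + z = 0) :
    3 * (3 * (x * y * z) + t * (x ^ 2 + y ^ 2 + z ^ 2))
      = (t - x) * (y - z) ^ 2 + (t - y) * (x - z) ^ 2 + (t - z) * (x - y) ^ 2 := by
  obtain rfl : z = -(x + y) := by grind
  ring

theorem prod_add_mul_sum_sq_nonneg {t x y z : ℤ} (h : x + y + z = 0)
    (hx : x ≤ t) (hy : y ≤ t) (hz : z ≤ t) :
    0 ≤ 3 * (x * y * z) + t * (x ^ 2 + y ^ 2 + z ^ 2) := by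
  rw [← sub_nonneg] at hx hy hz
  have : 0 ≤ (t - x) * (y - z) ^ 2 + (t - y) * (x - z) ^ 2 + (t - z) * (x - y) ^ 2 := by
    positivity
  linarith [three_mul_prod_add_mul_sum_sq t h]

theorem sum_sq_eq_of_prod_add_mul_sum_sq_eq_zero {t x y z : ℤ} (h : x + y + z = 0)
    (hx : x ≤ t) (hy : y ≤ t) (hz : z ≤ t)
    (heq : 3 * (x * y * z) + t * (x ^ 2 + y ^ 2 + z ^ 2) = 0) :
    x ^ 2 + y ^ 2 + z ^ 2 = 0 ∨ x ^ 2 + y ^ 2 + z ^ 2 = 6 * t ^ 2 := by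
  have key := three_mul_prod_add_mul_sum_sq t h
  have hx' := mul_nonneg (sub_nonneg.mpr hx) (sq_nonneg (y - z))
  have hy' := mul_nonneg (sub_nonneg.mpr hy) (sq_nonneg (x - z))
  have hz' := mul_nonneg (sub_nonneg.mpr hz) (sq_nonneg (x - y))
  have x_eq_or : (t - x) * (y - z) ^ 2 = 0 := by linarith
  have y_eq_or : (t - y) * (x - z) ^ 2 = 0 := by linarith
  have z_eq_or : (t - z) * (x - y) ^ 2 = 0 := by linarith
  simp only [mul_eq_zero, pow_eq_zero_iff two_ne_zero, sub_eq_zero] at x_eq_or y_eq_or z_eq_or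
  grind

theorem sum_erase_zero_sum_excess_sq (S : Finset (Fin n → ZMod 3)) :
    ∑ w ∈ univ.erase 0, ∑ c, excess S w c ^ 2 = 6 * #S * (3 ^ n - #S) := by
  obtain ⟨h₀, h₁, h₂⟩ := excess_zero_left S
  rw [sum_erase_eq_sub (mem_univ _), sum_sum_excess_sq, sum_zmod_three, h₀, h₁, h₂]
  ring

theorem IsCap.sum_erase_zero_prod_excess {S : Finset (Fin n → ZMod 3)} (hS : IsCap S) :
    ∑ w ∈ univ.erase 0, excess S w 0 * excess S w 1 * excess S w 2
      = 2 * #S * (3 ^ n - #S ^ 2) := by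
  obtain ⟨h₀, h₁, h₂⟩ := excess_zero_left S
  rw [sum_erase_eq_sub (mem_univ _), hS.sum_prod_excess, h₀, h₁, h₂]
  ring

section MeshulamStep

variable {b : ℕ} {S : Finset (Fin (n + 1) → ZMod 3)}

theorem IsCap.prod_add_mul_sum_sq_excess_nonneg
    (hb : ∀ T : Finset (Fin n → ZMod 3), IsCap T → #T ≤ b) (hS : IsCap S)
    {w : Fin (n + 1) → ZMod 3} (hw : w ≠ 0) :
    0 ≤ 3 * (excess S w 0 * excess S w 1 * excess S w 2)
      + (3 * b - #S) * ∑ c, excess S w c ^ 2 := by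
  rw [sum_zmod_three]
  exact prod_add_mul_sum_sq_nonneg (excess_add_excess_add_excess S w) (hS.excess_le hb hw 0)
    (hS.excess_le hb hw 1) (hS.excess_le hb hw 2)

theorem IsCap.sum_prod_add_mul_sum_sq_excess (hS : IsCap S) (b : ℕ) :
    ∑ w ∈ univ.erase 0, (3 * (excess S w 0 * excess S w 1 * excess S w 2)
        + (3 * b - #S) * ∑ c, excess S w c ^ 2)
      = 18 * #S * (3 ^ n * (3 * b + 1) - #S * (3 ^ n + b)) := by
  rw [sum_add_distrib, ← mul_sum, ← mul_sum, hS.sum_erase_zero_prod_excess,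
    sum_erase_zero_sum_excess_sq]
  ring

theorem IsCap.card_mul_le (hb : ∀ T : Finset (Fin n → ZMod 3), IsCap T → #T ≤ b)
    (hS : IsCap S) : #S * (3 ^ n + b) ≤ 3 ^ n * (3 * b + 1) := by
  rcases S.eq_empty_or_nonempty with rfl | hne
  · simp
  have hcard : (0 : ℤ) < 18 * #S := by
    have := hne.card_pos
    lia
  have : (0 : ℤ) ≤ 18 * #S * (3 ^ n * (3 * b + 1) - #S * (3 ^ n + b)) := by
    rw [← hS.sum_prod_add_mul_sum_sq_excess]
    exact sum_nonneg fun w hw ↦ hS.prod_add_mul_sum_sq_excess_nonneg hb (ne_of_mem_erase hw)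
  have := sub_nonneg.mp (nonneg_of_mul_nonneg_right this hcard)
  exact_mod_cast this

theorem IsCap.sum_excess_sq_eq_of_card_mul_eq
    (hb : ∀ T : Finset (Fin n → ZMod 3), IsCap T → #T ≤ b) (hS : IsCap S)
    (heq : #S * (3 ^ n + b) = 3 ^ n * (3 * b + 1)) {w : Fin (n + 1) → ZMod 3} (hw : w ≠ 0) :
    ∑ c, excess S w c ^ 2 = 0 ∨ ∑ c, excess S w c ^ 2 = 6 * (3 * b - #S) ^ 2 := by
  have sum_eq_zero : ∑ w ∈ univ.erase 0, (3 * (excess S w 0 * excess S w 1 * excess S w 2)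
      + (3 * b - #S) * ∑ c, excess S w c ^ 2) = 0 := by
    have : (#S * (3 ^ n + b) : ℤ) = 3 ^ n * (3 * b + 1) := mod_cast heq
    rw [hS.sum_prod_add_mul_sum_sq_excess, this, sub_self, mul_zero]
  have term_eq_zero := (sum_eq_zero_iff_of_nonneg fun w hw ↦
    hS.prod_add_mul_sum_sq_excess_nonneg hb (ne_of_mem_erase hw)).mp sum_eq_zero w
    (mem_erase.mpr ⟨hw, mem_univ w⟩)
  rw [sum_zmod_three] at term_eq_zero ⊢
  exact sum_sq_eq_of_prod_add_mul_sum_sq_eq_zero (excess_add_excess_add_excess S w)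
    (hS.excess_le hb hw 0) (hS.excess_le hb hw 1) (hS.excess_le hb hw 2) term_eq_zero

theorem even_card_ne_zero_and_sum_excess_sq_ne_zero (S : Finset (Fin n → ZMod 3)) :
    Even #{w | w ≠ 0 ∧ ∑ c, excess S w c ^ 2 ≠ 0} := by
  have sum_excess_neg (w : Fin n → ZMod 3) :
      ∑ c, excess S (-w) c ^ 2 = ∑ c, excess S w c ^ 2 := by
    simp only [excess_neg_left]
    exact Equiv.sum_comp (Equiv.neg (ZMod 3)) fun c ↦ excess S w c ^ 2
  have neg_ne_self {w : Fin n → ZMod 3} (hw : w ≠ 0) : -w ≠ w := fun h ↦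
    hw (funext fun i ↦ (by decide : ∀ a : ZMod 3, -a = a → a = 0) _ (congrFun h i))
  refine even_card_of_involution (- ·) (fun w hw ↦ ?_) (fun w _ ↦ neg_neg w) fun w hw ↦ ?_
  · simpa [sum_excess_neg] using hw
  · exact neg_ne_self (mem_filter.mp hw).2.1

theorem IsCap.exists_even_mul_eq_of_card_mul_eq
    (hb : ∀ T : Finset (Fin n → ZMod 3), IsCap T → #T ≤ b) (hS : IsCap S)
    (heq : #S * (3 ^ n + b) = 3 ^ n * (3 * b + 1)) :
    ∃ k : ℕ, Even k ∧ (#S * (3 ^ (n + 1) - #S) : ℤ) = k * (3 * b - #S) ^ 2 := by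
  refine ⟨_, even_card_ne_zero_and_sum_excess_sq_ne_zero S, ?_⟩
  have sum_eq : ∑ w ∈ univ.erase 0, ∑ c, excess S w c ^ 2
      = #{w | w ≠ 0 ∧ ∑ c, excess S w c ^ 2 ≠ 0} * (6 * (3 * b - #S : ℤ) ^ 2) := by
    rw [← filter_ne', ← sum_filter_ne_zero, filter_filter, ← nsmul_eq_mul]
    refine sum_eq_card_nsmul fun w hw ↦ ?_
    obtain ⟨hw, hne⟩ := (mem_filter.mp hw).2
    exact (hS.sum_excess_sq_eq_of_card_mul_eq hb heq hw).resolve_left hne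
  rw [sum_erase_zero_sum_excess_sq] at sum_eq
  linarith

end MeshulamStep

theorem IsCap.card_le_two {S : Finset (Fin 1 → ZMod 3)} (hS : IsCap S) : #S ≤ 2 := by
  have := hS.card_mul_le (b := 1) fun T _ ↦ card_le_one_of_subsingleton T
  lia

theorem IsCap.card_le_four {S : Finset (Fin 2 → ZMod 3)} (hS : IsCap S) : #S ≤ 4 := by
  have := hS.card_mul_le fun _ ↦ IsCap.card_le_two
  lia

theorem IsCap.card_le_nine {S : Finset (Fin 3 → ZMod 3)} (hS : IsCap S) : #S ≤ 9 := by
  have := hS.card_mul_le fun _ ↦ IsCap.card_le_four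
  lia

theorem IsCap.card_le_twenty {S : Finset (Fin 4 → ZMod 3)} (hS : IsCap S) : #S ≤ 20 := by
  have card_le : #S ≤ 21 := by
    have := hS.card_mul_le fun _ ↦ IsCap.card_le_nine
    lia
  have card_ne : #S ≠ 21 := by
    intro h
    obtain ⟨k, ⟨m, rfl⟩, hk⟩ :=
      hS.exists_even_mul_eq_of_card_mul_eq (fun _ ↦ IsCap.card_le_nine) (by rw [h]; norm_num)
    rw [h] at hk
    lia
  lia

theorem maximalCap_of_card_mul_le_sum_card {ι : Type*} [Fintype ι] {b : ℕ}
    (hb : ∀ T : Finset (Fin n → ZMod 3), IsCap T → #T ≤ b) {F : ι → Finset (Fin n → ZMod 3)}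
    (hF : ∀ j, IsCap (F j)) (hsum : Fintype.card ι * b ≤ ∑ j, #(F j)) (j : ι) :
    MaximalCap (F j) := by
  have sum_eq : ∑ j, #(F j) = ∑ _j : ι, b := by
    refine (sum_le_sum fun j _ ↦ hb _ (hF j)).antisymm ?_
    simpa using hsum
  have card_eq : #(F j) = b :=
    (sum_eq_sum_iff_of_le fun j _ ↦ hb _ (hF j)).mp sum_eq j (mem_univ j)
  exact ⟨hF j, fun T hT ↦ card_eq ▸ hb T hT⟩

section FieldCaps

theorem map_eq_self_of_map_mul_map_map {R : Type*} [CommRing R] [IsDomain R] {φ : R →+* R}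
    (hφ : Function.Injective φ) {y : R} (h₀ : φ (y * φ (φ y)) = y * φ (φ y))
    (h₁ : φ ((1 + y) * φ (φ (1 + y))) = (1 + y) * φ (φ (1 + y))) : φ y = y := by
  simp only [map_mul, map_add, map_one] at h₀ h₁
  have trace_fixed : φ y + φ (φ (φ y)) = y + φ (φ y) := by linear_combination h₁ - h₀
  -- `φ` permutes the roots `y` and `φ (φ y)` of a quadratic polynomial with fixed coefficients.
  have root : (φ y - y) * (φ y - φ (φ y)) = 0 := by linear_combination φ y * trace_fixed - h₀
  rcases mul_eq_zero.mp root with h | h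
  · exact sub_eq_zero.mp h
  · exact (hφ (sub_eq_zero.mp h)).symm

variable {K : Type*} [Field K]

theorem eq_one_of_pow_twenty_eq_one [CharP K 3] {y : K} (h₀ : y ^ 20 = 1)
    (h₁ : (1 + y) ^ 20 = 1) : y = 1 := by
  let φ := frobenius K 3
  have norm_fixed {a : K} (ha : a ^ 20 = 1) : φ (a * φ (φ a)) = a * φ (φ a) := by
    simp only [φ, frobenius_def]
    linear_combination a ^ 10 * ha
  have cube_eq : y ^ 3 = y := map_eq_self_of_map_mul_map_map (frobenius_inj K 3)
    (norm_fixed h₀) (norm_fixed h₁)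
  have hy : y ≠ 0 := by
    rintro rfl
    simp at h₀
  have hy' : 1 + y ≠ 0 := by
    intro h
    simp [h] at h₁
  have : y * (1 + y) * (y - 1) = 0 := by linear_combination cube_eq
  simpa [hy, hy', sub_eq_zero] using this

theorem eq_of_add_add_eq_zero_of_pow_twenty_eq [CharP K 3] {x y z ζ : K} (hζ : ζ ≠ 0)
    (hx : x ^ 20 = ζ) (hy : y ^ 20 = ζ) (hz : z ^ 20 = ζ) (h : x + y + z = 0) : x = y := by
  have hx0 : x ≠ 0 := by
    rintro rfl
    exact hζ (by simp [← hx])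
  have h₀ : (y / x) ^ 20 = 1 := by rw [div_pow, hx, hy, div_self hζ]
  have h₁ : (1 + y / x) ^ 20 = 1 := by
    rw [one_add_div hx0, eq_neg_of_add_eq_zero_left h, div_pow, Even.neg_pow (by decide),
      hx, hz, div_self hζ]
  exact ((div_eq_one_iff_eq hx0).mp (eq_one_of_pow_twenty_eq_one h₀ h₁)).symm

/-- The fourth roots of unity, given a square root `i` of `-1`. -/
def fourthRoots (i : K) : Fin 4 → K := ![1, -1, i, -i]

theorem fourthRoots_injective [NeZero (2 : K)] {i : K} (hi : i * i = -1) :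
    Function.Injective (fourthRoots i) := by
  have two_ne_zero : (2 : K) ≠ 0 := NeZero.ne 2
  intro j k h
  fin_cases j <;> fin_cases k <;> simp [fourthRoots] at h ⊢ <;> grind

theorem fourthRoots_ne_zero {i : K} (hi : i * i = -1) (j : Fin 4) : fourthRoots i j ≠ 0 := by
  have i_ne_zero : i ≠ 0 := by
    rintro rfl
    simp at hi
  fin_cases j <;> simp [fourthRoots, i_ne_zero]

theorem pow_four_eq_one_iff_exists_fourthRoots {i : K} (hi : i * i = -1) {x : K} :
    x ^ 4 = 1 ↔ ∃ j, x = fourthRoots i j := by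
  have factorization : x ^ 4 - 1 = (x - 1) * ((x + 1) * ((x - i) * (x + i))) := by
    linear_combination (x ^ 2 - 1) * hi
  rw [← sub_eq_zero, factorization]
  simp [fourthRoots, Fin.exists_fin_succ, sub_eq_zero, add_eq_zero_iff_eq_neg]

variable [DecidableEq K] {f : (Fin n → ZMod 3) →+ K}

/-- The points that `f` sends to solutions of `x ^ 20 = ζ`. When `f` identifies `AG(4,3)` with the
field of 81 elements and `ζ ^ 4 = 1`, this is a coset of the group of nonzero fourth powers. -/
def powTwentyFiber (f : (Fin n → ZMod 3) →+ K) (ζ : K) : Finset (Fin n → ZMod 3) :=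
  {v | f v ^ 20 = ζ}

theorem disjoint_powTwentyFiber {ζ ξ : K} (h : ζ ≠ ξ) :
    Disjoint (powTwentyFiber f ζ) (powTwentyFiber f ξ) :=
  disjoint_filter.mpr fun _ _ hζ hξ ↦ h (hζ.symm.trans hξ)

theorem isCap_powTwentyFiber [CharP K 3] (hf : Function.Injective f) {ζ : K} (hζ : ζ ≠ 0) :
    IsCap (powTwentyFiber f ζ) := by
  intro x hx y hy z hz hxy _ _ h
  simp only [powTwentyFiber, mem_filter, mem_univ, true_and] at hx hy hz
  exact hxy (hf (eq_of_add_add_eq_zero_of_pow_twenty_eq hζ hx hy hz (by simp [← map_add, h])))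

theorem biUnion_powTwentyFiber_fourthRoots [Finite K] (hK : Nat.card K = 81)
    (hf : Function.Injective f) {i : K} (hi : i * i = -1) :
    univ.biUnion (fun j ↦ powTwentyFiber f (fourthRoots i j)) = univ \ {0} := by
  have pow_eighty (x : K) : x ^ 80 = 1 ↔ x ≠ 0 := by
    refine ⟨?_, fun hx ↦ ?_⟩
    · rintro h rfl
      simp at h
    · have := Fintype.ofFinite K
      rw [Nat.card_eq_fintype_card] at hK
      simpa [hK] using FiniteField.pow_card_sub_one_eq_one x hx
  ext v
  simp only [powTwentyFiber, mem_biUnion, mem_filter, mem_univ, true_and, mem_sdiff, mem_singleton]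
  rw [← pow_four_eq_one_iff_exists_fourthRoots hi, ← pow_mul, pow_eighty, map_ne_zero_iff f hf]

end FieldCaps

theorem exists_four_caps_biUnion_eq_univ_sdiff_zero :
    ∃ F : Fin 4 → Finset (Fin 4 → ZMod 3), (∀ j, IsCap (F j)) ∧
      Pairwise (Function.onFun Disjoint F) ∧ univ.biUnion F = univ \ {0} := by
  classical
  let K := GaloisField 3 4
  have := Fintype.ofFinite K
  have card_K : Nat.card K = 81 := by
    rw [GaloisField.card 3 4 (by decide)]
    norm_num
  obtain ⟨i, hi⟩ : IsSquare (-1 : K) := by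
    rw [FiniteField.isSquare_neg_one_iff, ← Nat.card_eq_fintype_card, card_K]
    decide
  have two_ne_zero : NeZero (2 : K) := ⟨Ring.two_ne_zero (by simp [ringChar.eq K 3])⟩
  have roots_inj := fourthRoots_injective hi.symm
  let e : (Fin 4 → ZMod 3) ≃ₗ[ZMod 3] K :=
    LinearEquiv.ofFinrankEq _ _ (by simp [K, GaloisField.finrank])
  let f : (Fin 4 → ZMod 3) →+ K := e.toLinearMap.toAddMonoidHom
  have hf : Function.Injective f := e.injective
  refine ⟨fun j ↦ powTwentyFiber f (fourthRoots i j),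
    fun j ↦ isCap_powTwentyFiber hf (fourthRoots_ne_zero hi.symm j),
    fun j k hjk ↦ disjoint_powTwentyFiber (roots_inj.ne hjk),
    biUnion_powTwentyFiber_fourthRoots card_K hf hi.symm⟩

/-- `AG(4,3)` can be partitioned into four mutually disjoint maximal caps together with
a single remaining point. -/
theorem AG43_partition_into_four_maximal_caps :
    ∃ (a : Fin 4 → ZMod 3) (A B C D : Finset (Fin 4 → ZMod 3)),
      MaximalCap A ∧ MaximalCap B ∧ MaximalCap C ∧ MaximalCap D ∧
      Disjoint A B ∧ Disjoint A C ∧ Disjoint A D ∧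
      Disjoint B C ∧ Disjoint B D ∧ Disjoint C D ∧
      A ∪ B ∪ C ∪ D = Finset.univ \ {a} := by
  obtain ⟨F, hcap, hdisj, hcover⟩ := exists_four_caps_biUnion_eq_univ_sdiff_zero
  have sum_card : ∑ j, #(F j) = 80 := by
    rw [← card_biUnion fun j _ k _ hjk ↦ hdisj hjk, hcover, card_sdiff_of_subset (subset_univ _)]
    simp
  have hmax := maximalCap_of_card_mul_le_sum_card (fun _ ↦ IsCap.card_le_twenty) hcap
    (by simp [sum_card])
  refine ⟨0, F 0, F 1, F 2, F 3, hmax 0, hmax 1, hmax 2, hmax 3,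
    hdisj (by decide), hdisj (by decide), hdisj (by decide), hdisj (by decide),
    hdisj (by decide), hdisj (by decide), ?_⟩
  rw [← hcover]
  ext v
  simp [Fin.exists_fin_succ]
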